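/- Levin–Schnorr theorem: A ∈ 2^ω is Martin-Löf random if and only if there is some c ∈ ℕ such that K(A↾n) ≥ n − c for all n ∈ ℕ. -/

import Mathlib

open scoped ENNReal NNReal Classical

namespace AR

/-- Elements of Cantor space `2^ω`: infinite binary sequences. -/
abbrev Seq := ℕ → Bool

/-- Finite binary strings `2^{<ω}`. -/
abbrev Str := List Bool

/-- The first `n` bits of a sequence `A`, as a finite string (`A↾n`). -/
def pre (A : Seq) (n : ℕ) : Str := List.ofFn fun i : Fin n => A i

/-- The basic clopen cylinder `[σ]` of all sequences extending `σ`. -/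
def cyl (σ : Str) : Set Seq := {A | pre A σ.length = σ}

/-- A measure on Cantor space is *fair-coin* if every cylinder `[σ]` has measure
`2^{-|σ|}`; this uniquely characterizes the usual product measure `μ` on `2^ω`. -/
def FairCoin (μ : MeasureTheory.Measure Seq) : Prop :=
  ∀ σ : Str, μ (cyl σ) = (2 : ℝ≥0∞)⁻¹ ^ σ.length

/-- A machine is a partial computable function `2^{<ω} ⇀ 2^{<ω}`. -/
def IsMachine (M : Str →. Str) : Prop := Partrec M

/-- Kolmogorov complexity of `τ` relative to the machine `M`:
`C_M(τ) = min{|σ| : M(σ)↓ = τ}`, with value `∞` if no such `σ` exists. -/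
noncomputable def Cplx (M : Str →. Str) (τ : Str) : ℕ∞ :=
  sInf ((fun σ : Str => (σ.length : ℕ∞)) '' {σ | τ ∈ M σ})

/-- A universal machine: a machine simulating every machine up to an additive
constant.  `Cplx U` for universal `U` is plain Kolmogorov complexity `C`. -/
def UniversalMachine (U : Str →. Str) : Prop :=
  IsMachine U ∧ ∀ M : Str →. Str, IsMachine M → ∃ c : ℕ, ∀ τ, Cplx U τ ≤ Cplx M τ + c

/-- A set of strings is prefix-free if none of its elements is a proper initial
segment of another. -/
def PrefixFree (S : Set Str) : Prop :=
  ∀ σ ∈ S, ∀ τ ∈ S, σ <+: τ → σ = τ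

/-- A prefix-free machine: a machine whose domain is prefix-free. -/
def PrefixFreeMachine (M : Str →. Str) : Prop :=
  IsMachine M ∧ PrefixFree {σ | (M σ).Dom}

/-- A universal prefix-free machine.  `Cplx U` for such `U` is prefix-free
Kolmogorov complexity `K`. -/
def UniversalPFMachine (U : Str →. Str) : Prop :=
  PrefixFreeMachine U ∧
    ∀ M : Str →. Str, PrefixFreeMachine M → ∃ c : ℕ, ∀ τ, Cplx U τ ≤ Cplx M τ + c

/-- A c.e. (recursively enumerable) predicate. -/
def CEPred {α} [Primcodable α] (p : α → Prop) : Prop :=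
  Partrec fun a => Part.assert (p a) fun _ => Part.some ()

/-- A Martin-Löf test: a sequence of uniformly Σ⁰₁ classes `U i`, given by a single
c.e. set `W` of pairs, with `μ (U i) ≤ 2^{-i}`. -/
def MLTest (μ : MeasureTheory.Measure Seq) (U : ℕ → Set Seq) : Prop :=
  ∃ W : Set (ℕ × Str), CEPred (· ∈ W) ∧
    (∀ i, U i = ⋃ σ ∈ {σ : Str | (i, σ) ∈ W}, cyl σ) ∧
    ∀ i, μ (U i) ≤ (2 : ℝ≥0∞)⁻¹ ^ i

/-- `A` is Martin-Löf random if it passes every Martin-Löf test. -/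
def MLRandom (μ : MeasureTheory.Measure Seq) (A : Seq) : Prop :=
  ∀ U : ℕ → Set Seq, MLTest μ U → A ∉ ⋂ i, U i

theorem primrec_two_pow : Primrec fun n : ℕ => 2 ^ n :=
  (Primrec.nat_rec₁ 1 (Primrec.nat_mul.comp Primrec.snd (Primrec.const 2)).to₂).of_eq fun n => by
    induction n with
    | zero => rfl
    | succ n ih => simp only [ih, pow_succ]

/-- Every partial computable function has a primitive recursive approximation by stages. -/
theorem exists_primrec_stages {α σ : Type*} [Primcodable α] [Primcodable σ] {f : α →. σ}
    (hf : Partrec f) :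
    ∃ g : ℕ → α → Option σ, Primrec₂ g ∧ (∀ s t a b, s ≤ t → b ∈ g s a → b ∈ g t a) ∧
      ∀ a b, b ∈ f a ↔ ∃ s, b ∈ g s a := by
  obtain ⟨c, hc⟩ := Nat.Partrec.Code.exists_code.1 hf
  refine ⟨fun s a => (Nat.Partrec.Code.evaln s c (Encodable.encode a)).bind Encodable.decode,
    ?_, ?_, ?_⟩
  · exact Primrec.option_bind
      (Nat.Partrec.Code.primrec_evaln.comp
        ((Primrec.fst.pair (Primrec.const c)).pair (Primrec.encode.comp Primrec.snd)))
      (Primrec.decode.comp Primrec.snd).to₂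
  · intro s t a b hst hb
    obtain ⟨x, hx, hxb⟩ := Option.mem_bind_iff.1 hb
    exact Option.mem_bind_iff.2 ⟨x, Nat.Partrec.Code.evaln_mono hst hx, hxb⟩
  · intro a b
    have heval : Nat.Partrec.Code.eval c (Encodable.encode a) = (f a).map Encodable.encode := by
      simp [hc]
    constructor
    · intro hb
      have hmem : Encodable.encode b ∈ Nat.Partrec.Code.eval c (Encodable.encode a) := by
        rw [heval]
        exact Part.mem_map _ hb
      obtain ⟨s, hs⟩ := Nat.Partrec.Code.evaln_complete.1 hmem
      exact ⟨s, Option.mem_bind_iff.2 ⟨_, hs, Encodable.encodek b⟩⟩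
    · rintro ⟨s, hs⟩
      obtain ⟨x, hx, hxb⟩ := Option.mem_bind_iff.1 hs
      have hmem := Nat.Partrec.Code.evaln_sound hx
      rw [heval, Part.mem_map_iff] at hmem
      obtain ⟨b', hb', rfl⟩ := hmem
      rw [Encodable.encodek, Option.mem_some_iff] at hxb
      exact hxb ▸ hb'

/-- The number whose binary expansion, most significant bit first, is `σ`. -/
def binVal (σ : Str) : ℕ := σ.foldl (fun v b => 2 * v + b.toNat) 0

theorem primrec_binVal : Primrec binVal :=
  Primrec.list_foldl Primrec.id (Primrec.const 0)
    (Primrec.nat_add.comp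
      (Primrec.nat_mul.comp (Primrec.const 2) (Primrec.fst.comp Primrec.snd))
      ((Primrec.dom_bool Bool.toNat).comp (Primrec.snd.comp Primrec.snd))).to₂

theorem binVal_concat (σ : Str) (b : Bool) : binVal (σ ++ [b]) = 2 * binVal σ + b.toNat := by
  simp [binVal]

theorem exists_binVal_eq (n p : ℕ) (hp : p < 2 ^ n) : ∃ σ : Str, σ.length = n ∧ binVal σ = p := by
  induction n generalizing p with
  | zero => exact ⟨[], rfl, by simp at hp; simp [hp, binVal]⟩
  | succ n ih =>
    obtain ⟨σ, hσ, hv⟩ := ih (p / 2) (by rw [pow_succ] at hp; omega)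
    refine ⟨σ ++ [p.bodd], by simp [hσ], ?_⟩
    rw [binVal_concat, hv]
    have := Nat.mod_two_of_bodd p
    cases h : p.bodd <;> simp [h] at this ⊢ <;> omega

/-- The left endpoint of the dyadic subinterval of `[0, 1]` coded by `σ`. -/
noncomputable def leftEnd (σ : Str) : ℝ := binVal σ / 2 ^ σ.length

theorem leftEnd_append (σ ρ : Str) :
    leftEnd σ ≤ leftEnd (σ ++ ρ) ∧
      leftEnd (σ ++ ρ) + (2 ^ (σ ++ ρ).length)⁻¹ ≤ leftEnd σ + (2 ^ σ.length)⁻¹ := by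
  induction ρ using List.reverseRecOn with
  | nil => simp
  | append_singleton ρ b ih =>
    rw [← List.append_assoc]
    generalize σ ++ ρ = τ at ih
    have hpos : (0 : ℝ) < 2 ^ τ.length := by positivity
    have hl : leftEnd (τ ++ [b]) = leftEnd τ + b.toNat * (2 ^ τ.length)⁻¹ / 2 := by
      simp only [leftEnd, binVal_concat, List.length_append, List.length_singleton, pow_succ]
      push_cast
      field_simp
    have hr : ((2 : ℝ) ^ (τ ++ [b]).length)⁻¹ = (2 ^ τ.length)⁻¹ / 2 := by
      simp only [List.length_append, List.length_singleton, pow_succ]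
      field_simp
    have hinv := inv_pos.2 hpos
    rw [hl, hr]
    cases b <;> simp <;> constructor <;> linarith [ih.1, ih.2]

/-- The weight `2^{-d}` of a request `(d, τ)` for a description of `τ` of length `d`. -/
noncomputable def weight (o : Option (ℕ × Str)) : ℝ≥0 := o.elim 0 fun q => 2⁻¹ ^ q.1

/-- The dyadic rational `a / 2 ^ e`, as a pair `(a, e)`, that is the total weight of the first
`j` requests. -/
def partialWeight (r : ℕ → Option (ℕ × Str)) (j : ℕ) : ℕ × ℕ :=
  Nat.rec (0, 0) (fun i s =>
    Option.casesOn (r i) s fun q => (s.1 * 2 ^ q.1 + 2 ^ s.2, s.2 + q.1)) j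

theorem primrec_partialWeight {r : ℕ → Option (ℕ × Str)} (hr : Primrec r) :
    Primrec (partialWeight r) := by
  refine Primrec.nat_rec₁ _ (Primrec.option_casesOn (hr.comp Primrec.fst) Primrec.snd ?_)
  have hs : Primrec fun x : (ℕ × ℕ × ℕ) × ℕ × Str => x.1.2 := Primrec.snd.comp Primrec.fst
  have hd : Primrec fun x : (ℕ × ℕ × ℕ) × ℕ × Str => x.2.1 := Primrec.fst.comp Primrec.snd
  exact ((Primrec.nat_add.comp
    (Primrec.nat_mul.comp (Primrec.fst.comp hs) (primrec_two_pow.comp hd))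
    (primrec_two_pow.comp (Primrec.snd.comp hs))).pair
      (Primrec.nat_add.comp (Primrec.snd.comp hs) hd)).to₂

theorem partialWeight_eq (r : ℕ → Option (ℕ × Str)) (j : ℕ) :
    ((partialWeight r j).1 : ℝ) / 2 ^ (partialWeight r j).2 =
      ∑ i ∈ Finset.range j, (weight (r i) : ℝ) := by
  induction j with
  | zero => simp [partialWeight]
  | succ j ih =>
    rw [Finset.sum_range_succ, ← ih]
    have hstep : partialWeight r (j + 1) = Option.casesOn (r j) (partialWeight r j)
      fun q => ((partialWeight r j).1 * 2 ^ q.1 + 2 ^ (partialWeight r j).2,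
        (partialWeight r j).2 + q.1) := rfl
    rw [hstep]
    cases r j with
    | none => simp [weight]
    | some q =>
      simp only [weight, Option.elim_some]
      push_cast
      rw [pow_add, inv_pow]
      field_simp

/-- `σ` codes a dyadic interval, of half the length requested, contained in the interval allotted
to the request `q` when the requests before it have total weight `s.1 / 2 ^ s.2`. -/
def Allotted (σ : Str) (s : ℕ × ℕ) (q : ℕ × Str) : Prop :=
  σ.length = q.1 + 1 ∧ s.1 * 2 ^ (q.1 + 1) ≤ binVal σ * 2 ^ s.2 ∧
    binVal σ * 2 ^ s.2 ≤ s.1 * 2 ^ (q.1 + 1) + 2 ^ s.2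

theorem primrecPred_allotted :
    PrimrecPred fun x : (Str × (ℕ × ℕ)) × (ℕ × Str) => Allotted x.1.1 x.1.2 x.2 := by
  have hd : Primrec fun x : (Str × (ℕ × ℕ)) × (ℕ × Str) => x.2.1 + 1 :=
    Primrec.succ.comp (Primrec.fst.comp Primrec.snd)
  have hσ : Primrec fun x : (Str × (ℕ × ℕ)) × (ℕ × Str) => x.1.1 := Primrec.fst.comp Primrec.fst
  have hs : Primrec fun x : (Str × (ℕ × ℕ)) × (ℕ × Str) => x.1.2 := Primrec.snd.comp Primrec.fst
  have he := primrec_two_pow.comp (Primrec.snd.comp hs)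
  have ha := Primrec.nat_mul.comp (Primrec.fst.comp hs) (primrec_two_pow.comp hd)
  have hv := Primrec.nat_mul.comp (primrec_binVal.comp hσ) he
  exact (Primrec.eq.comp (Primrec.list_length.comp hσ) hd).and
    ((Primrec.nat_le.comp ha hv).and (Primrec.nat_le.comp hv (Primrec.nat_add.comp ha he)))

theorem Allotted.bounds {r : ℕ → Option (ℕ × Str)} {j : ℕ} {q : ℕ × Str} (hq : r j = some q)
    {σ : Str} (h : Allotted σ (partialWeight r j) q) :
    ∑ i ∈ Finset.range j, (weight (r i) : ℝ) ≤ leftEnd σ ∧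
      leftEnd σ + (2 ^ σ.length)⁻¹ ≤ ∑ i ∈ Finset.range (j + 1), (weight (r i) : ℝ) := by
  obtain ⟨hlen, hlo, hhi⟩ := h
  rw [Finset.sum_range_succ, ← partialWeight_eq, leftEnd, hlen, hq]
  generalize partialWeight r j = s at *
  have hlo' : (s.1 : ℝ) * 2 ^ (q.1 + 1) ≤ binVal σ * 2 ^ s.2 := by exact_mod_cast hlo
  have hhi' : (binVal σ : ℝ) * 2 ^ s.2 ≤ s.1 * 2 ^ (q.1 + 1) + 2 ^ s.2 := by exact_mod_cast hhi
  have he : (0 : ℝ) < 2 ^ s.2 := by positivity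
  have hd : (0 : ℝ) < 2 ^ (q.1 + 1) := by positivity
  refine ⟨(div_le_div_iff₀ he hd).2 hlo', ?_⟩
  have hw : (weight (some q) : ℝ) = 2 / 2 ^ (q.1 + 1) := by
    simp only [weight, Option.elim_some]
    push_cast
    rw [pow_succ, inv_pow]
    field_simp
  have hle : (binVal σ : ℝ) / 2 ^ (q.1 + 1) ≤ s.1 / 2 ^ s.2 + (2 ^ (q.1 + 1))⁻¹ := by
    rw [div_le_iff₀ hd, add_mul, inv_mul_cancel₀ hd.ne', ← mul_le_mul_iff_left₀ he]
    calc (binVal σ : ℝ) * 2 ^ s.2 ≤ s.1 * 2 ^ (q.1 + 1) + 2 ^ s.2 := hhi'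
      _ = (s.1 / 2 ^ s.2 * 2 ^ (q.1 + 1) + 1) * 2 ^ s.2 := by field_simp
  rw [hw]
  have : (2 : ℝ) / 2 ^ (q.1 + 1) = (2 ^ (q.1 + 1))⁻¹ + (2 ^ (q.1 + 1))⁻¹ := by ring
  linarith

theorem exists_allotted {r : ℕ → Option (ℕ × Str)} {j : ℕ} {q : ℕ × Str} (hq : r j = some q)
    (hw : ∑ i ∈ Finset.range (j + 1), (weight (r i) : ℝ) ≤ 1) :
    ∃ σ, Allotted σ (partialWeight r j) q := by
  rw [Finset.sum_range_succ, ← partialWeight_eq, hq] at hw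
  unfold Allotted
  generalize partialWeight r j = s at *
  have he : 0 < 2 ^ s.2 := by positivity
  have hs : s.1 * 2 ^ q.1 + 2 ^ s.2 ≤ 2 ^ s.2 * 2 ^ q.1 := by
    simp only [weight, Option.elim_some] at hw
    push_cast at hw
    rw [inv_pow, ← mul_le_mul_iff_left₀ (show (0 : ℝ) < 2 ^ s.2 * 2 ^ q.1 by positivity)] at hw
    field_simp at hw
    exact_mod_cast (by linarith : (s.1 : ℝ) * 2 ^ q.1 + 2 ^ s.2 ≤ 2 ^ s.2 * 2 ^ q.1)
  have hceil_lo := Nat.lt_div_mul_add (a := s.1 * 2 ^ (q.1 + 1) + 2 ^ s.2 - 1) he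
  have hceil_hi := Nat.div_mul_le_self (s.1 * 2 ^ (q.1 + 1) + 2 ^ s.2 - 1) (2 ^ s.2)
  obtain ⟨σ, hσ, hv⟩ := exists_binVal_eq (q.1 + 1)
    ((s.1 * 2 ^ (q.1 + 1) + 2 ^ s.2 - 1) / 2 ^ s.2) (by
      rw [Nat.div_lt_iff_lt_mul he, pow_succ]
      have : 2 ^ q.1 * 2 * 2 ^ s.2 = 2 * (2 ^ s.2 * 2 ^ q.1) := by ring
      have : s.1 * (2 ^ q.1 * 2) = 2 * (s.1 * 2 ^ q.1) := by ring
      omega)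
  refine ⟨σ, hσ, ?_, ?_⟩ <;> rw [hv] <;> omega

/-- A weak form of the Kraft–Chaitin theorem: a primitive recursive sequence of requests of total
weight at most one is met, up to one extra bit, by a prefix-free machine. -/
theorem exists_prefixFreeMachine_of_requests {r : ℕ → Option (ℕ × Str)} (hr : Primrec r)
    (hw : ∑' j, (weight (r j) : ℝ≥0∞) ≤ 1) :
    ∃ M : Str →. Str, PrefixFreeMachine M ∧
      ∀ j d τ, r j = some (d, τ) → Cplx M τ ≤ (d + 1 : ℕ) := by
  have hsum : ∀ j, ∑ i ∈ Finset.range j, (weight (r i) : ℝ) ≤ 1 := fun j => by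
    have h := (ENNReal.sum_le_tsum (Finset.range j)).trans hw
    exact_mod_cast h
  have hmono : Monotone fun j => ∑ i ∈ Finset.range j, (weight (r i) : ℝ) := fun i j hij =>
    Finset.sum_le_sum_of_subset_of_nonneg (Finset.range_subset_range.2 hij)
      fun _ _ _ => NNReal.coe_nonneg _
  have hindex : ∀ {σ τ : Str} {i j : ℕ} {p q : ℕ × Str}, σ <+: τ → r i = some p → r j = some q →
      Allotted σ (partialWeight r i) p → Allotted τ (partialWeight r j) q → i = j := by
    rintro σ _ i j p q ⟨ρ, rfl⟩ hp hq hσ hτ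
    have hσ' := hσ.bounds hp
    have hτ' := hτ.bounds hq
    have hρ := leftEnd_append σ ρ
    have hpos : (0 : ℝ) < (2 ^ (σ ++ ρ).length)⁻¹ := by positivity
    rcases lt_trichotomy i j with hij | hij | hij
    · have := hmono (Nat.succ_le_of_lt hij)
      simp only [Nat.succ_eq_add_one] at this
      linarith [hσ'.2, hτ'.1, hρ.2]
    · exact hij
    · have := hmono (Nat.succ_le_of_lt hij)
      simp only [Nat.succ_eq_add_one] at this
      linarith [hσ'.1, hτ'.2, hρ.1]
  let G : Str → ℕ → Option Str := fun σ j =>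
    (r j).bind fun q => if Allotted σ (partialWeight r j) q then some q.2 else none
  have hG : Primrec₂ G := by
    refine Primrec.option_bind (hr.comp Primrec.snd) (Primrec.ite ?_ ?_ (Primrec.const none))
    · exact primrecPred_allotted.comp
        (((Primrec.fst.comp Primrec.fst).pair
          ((primrec_partialWeight hr).comp (Primrec.snd.comp Primrec.fst))).pair Primrec.snd)
    · exact Primrec.option_some.comp (Primrec.snd.comp Primrec.snd)
  have hGmem : ∀ {σ j τ}, τ ∈ G σ j ↔
      ∃ q, r j = some q ∧ Allotted σ (partialWeight r j) q ∧ q.2 = τ := by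
    intro σ j τ
    simp [G, Option.bind_eq_some_iff]
  refine ⟨fun σ => Nat.rfindOpt (G σ), ⟨Partrec.rfindOpt hG.to_comp, ?_⟩, ?_⟩
  · intro σ hσ τ hτ hστ
    obtain ⟨i, a, ha⟩ := Nat.rfindOpt_dom.1 hσ
    obtain ⟨j, b, hb⟩ := Nat.rfindOpt_dom.1 hτ
    obtain ⟨p, hp, hpσ, -⟩ := hGmem.1 ha
    obtain ⟨q, hq, hqτ, -⟩ := hGmem.1 hb
    obtain rfl := hindex hστ hp hq hpσ hqτ
    obtain rfl : p = q := Option.some.inj (hp.symm.trans hq)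
    exact hστ.eq_of_length (hpσ.1.trans hqτ.1.symm)
  · intro j d τ hj
    obtain ⟨σ, hσ⟩ := exists_allotted hj (hsum (j + 1))
    obtain ⟨b, hb⟩ := Part.dom_iff_mem.1
      (Nat.rfindOpt_dom.2 ⟨j, τ, hGmem.2 ⟨_, hj, hσ, rfl⟩⟩)
    obtain ⟨i, hi⟩ := Nat.rfindOpt_spec hb
    obtain ⟨p, hp, hpσ, rfl⟩ := hGmem.1 hi
    obtain rfl := hindex (List.prefix_refl σ) hp hj hpσ hσ
    obtain rfl : p = (d, τ) := Option.some.inj (hp.symm.trans hj)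
    exact sInf_le ⟨σ, hb, by simp only [hσ.1]⟩

theorem length_pre (A : Seq) (n : ℕ) : (pre A n).length = n := by simp [pre]

theorem take_pre (A : Seq) {m n : ℕ} (h : m ≤ n) : (pre A n).take m = pre A m := by
  apply List.ext_getElem
  · simp [pre, h]
  · intro i _ _
    simp [pre]

theorem mem_cyl_pre (A : Seq) (n : ℕ) : A ∈ cyl (pre A n) := by
  simp [cyl, length_pre]

theorem measurableSet_cyl (σ : Str) : MeasurableSet (cyl σ) := by
  have h : cyl σ = ⋂ i : Fin σ.length, (fun A : Seq => A i) ⁻¹' {σ[i]} := by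
    ext A
    simp only [cyl, Set.mem_ofPred_eq, Set.mem_iInter, Set.mem_preimage, Set.mem_singleton_iff]
    constructor
    · intro h i
      have := List.getElem_of_eq h (i := i) (by simp [pre])
      simpa [pre] using this
    · intro h
      apply List.ext_getElem
      · simp [pre]
      · intro i _ hi
        simpa [pre] using h ⟨i, hi⟩
  rw [h]
  exact MeasurableSet.iInter fun i => measurable_pi_apply _ (measurableSet_singleton _)

theorem PrefixFree.pairwiseDisjoint_cyl {S : Set Str} (hS : PrefixFree S) :
    S.PairwiseDisjoint cyl := by
  intro σ hσ τ hτ hne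
  rw [Function.onFun, Set.disjoint_left]
  intro A (hAσ : pre A _ = σ) (hAτ : pre A _ = τ)
  apply hne
  rcases le_total σ.length τ.length with h | h
  · refine hS σ hσ τ hτ ?_
    rw [← hAσ, ← take_pre A h, hAτ]
    exact List.take_prefix _ _
  · refine (hS τ hτ σ hσ ?_).symm
    rw [← hAτ, ← take_pre A h, hAσ]
    exact List.take_prefix _ _

theorem PrefixFree.tsum_eq_measure {μ : MeasureTheory.Measure Seq} (hμ : FairCoin μ) {S : Set Str}
    (hS : PrefixFree S) : ∑' σ : S, (2 : ℝ≥0∞)⁻¹ ^ σ.1.length = μ (⋃ σ ∈ S, cyl σ) := by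
  rw [MeasureTheory.measure_biUnion S.to_countable hS.pairwiseDisjoint_cyl
    fun σ _ => measurableSet_cyl σ]
  exact tsum_congr fun σ => (hμ σ).symm

theorem PrefixFree.tsum_le_one {μ : MeasureTheory.Measure Seq} (hμ : FairCoin μ) {S : Set Str}
    (hS : PrefixFree S) : ∑' σ : S, (2 : ℝ≥0∞)⁻¹ ^ σ.1.length ≤ 1 := by
  rw [hS.tsum_eq_measure hμ]
  calc μ (⋃ σ ∈ S, cyl σ) ≤ μ (cyl []) := MeasureTheory.measure_mono fun A _ => by simp [cyl, pre]
    _ = 1 := by simp [hμ []]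

/-- Uniformly `Σ⁰₁` classes are generated by uniformly primitive recursive prefix-free sets. -/
theorem exists_primrec_prefixFree {W : Set (ℕ × Str)} (hW : CEPred (· ∈ W)) :
    ∃ V : Set (ℕ × Str), PrimrecPred (· ∈ V) ∧ (∀ i, PrefixFree {σ | (i, σ) ∈ V}) ∧
      ∀ i, ⋃ σ ∈ {σ : Str | (i, σ) ∈ V}, cyl σ = ⋃ σ ∈ {σ : Str | (i, σ) ∈ W}, cyl σ := by
  obtain ⟨g, hg, hgmono, hgmem⟩ := exists_primrec_stages hW
  have hWg : ∀ x, x ∈ W ↔ ∃ s, (g s x).isSome := by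
    intro x
    have := hgmem x ()
    simp only [Part.mem_assert_iff, Part.mem_some_iff, exists_prop, and_true] at this
    rw [this]
    simp only [Option.mem_def, Option.isSome_iff_exists]
    exact ⟨fun ⟨s, hs⟩ => ⟨s, (), hs⟩, fun ⟨s, (), hs⟩ => ⟨s, hs⟩⟩
  let E : ℕ × Str → Prop := fun x =>
    ∃ m < x.2.length + 1, (g x.2.length (x.1, x.2.take m)).isSome = true
  have hE : PrimrecPred E := by
    have hR : PrimrecRel fun (m : ℕ) (x : ℕ × Str) =>
        (g x.2.length (x.1, x.2.take m)).isSome = true := by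
      refine Primrec.eq.comp (Primrec.option_isSome.comp (hg.comp ?_ ?_)) (Primrec.const true)
      · exact Primrec.list_length.comp (Primrec.snd.comp Primrec.snd)
      · exact (Primrec.fst.comp Primrec.snd).pair
          (Primrec.list_take.comp Primrec.fst (Primrec.snd.comp Primrec.snd))
    exact (hR.exists_mem_list.comp (Primrec.list_range.comp
      (Primrec.succ.comp (Primrec.list_length.comp Primrec.snd))) Primrec.id).of_eq
        fun x => by simp only [List.mem_range]; rfl
  let V : Set (ℕ × Str) := {x | E x ∧ ∀ m < x.2.length, ¬ E (x.1, x.2.take m)}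
  have hV : PrimrecPred (· ∈ V) := by
    have hR : PrimrecRel fun (m : ℕ) (x : ℕ × Str) => ¬ E (x.1, x.2.take m) :=
      (hE.comp ((Primrec.fst.comp Primrec.snd).pair
        (Primrec.list_take.comp Primrec.fst (Primrec.snd.comp Primrec.snd)))).not
    exact hE.and ((hR.forall_mem_list.comp (Primrec.list_range.comp
      (Primrec.list_length.comp Primrec.snd)) Primrec.id).of_eq
        fun x => by simp only [List.mem_range]; rfl)
  refine ⟨V, hV, ?_, ?_⟩
  · intro i σ hσ τ hτ hστ
    by_contra hne
    have hlt : σ.length < τ.length :=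
      lt_of_le_of_ne hστ.length_le fun h => hne (hστ.eq_of_length h)
    have hσE : ¬ E (i, τ.take σ.length) := hτ.2 _ hlt
    rw [← List.prefix_iff_eq_take.1 hστ] at hσE
    exact hσE hσ.1
  · intro i
    ext A
    simp only [Set.mem_iUnion, Set.mem_ofPred_eq, exists_prop]
    constructor
    · rintro ⟨ρ, ⟨⟨m, hm, hgm⟩, -⟩, hA : pre A _ = ρ⟩
      simp only at hm hgm
      refine ⟨ρ.take m, (hWg _).2 ⟨_, hgm⟩, ?_⟩
      rw [← hA, take_pre A (Nat.le_of_lt_succ hm)]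
      exact mem_cyl_pre A m
    · rintro ⟨σ, hσ, hA : pre A _ = σ⟩
      obtain ⟨s, hs⟩ := (hWg _).1 hσ
      have hex : ∃ n, E (i, pre A n) := by
        refine ⟨max s σ.length, σ.length, ?_, ?_⟩
        · simp only [length_pre]
          omega
        · simp only [length_pre, take_pre A (le_max_right s σ.length), hA]
          obtain ⟨u, hu⟩ := Option.isSome_iff_exists.1 hs
          exact Option.isSome_iff_exists.2 ⟨u, hgmono _ _ _ _ (le_max_left _ _) hu⟩
      refine ⟨pre A (Nat.find hex), ⟨Nat.find_spec hex, ?_⟩, mem_cyl_pre A _⟩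
      intro m hm
      simp only [length_pre] at hm
      simp only [take_pre A hm.le]
      exact Nat.find_min hex hm

theorem two_inv_pow_sub {k n : ℕ} (h : k ≤ n) :
    (2 : ℝ≥0∞)⁻¹ ^ (n - k) = 2 ^ k * 2⁻¹ ^ n := by
  obtain ⟨m, rfl⟩ := Nat.exists_eq_add_of_le h
  rw [Nat.add_sub_cancel_left, pow_add, ← mul_assoc, ← mul_pow,
    ENNReal.mul_inv_cancel two_ne_zero ENNReal.ofNat_ne_top, one_pow, one_mul]

theorem le_of_two_inv_pow_le {m n : ℕ} (h : (2 : ℝ≥0∞)⁻¹ ^ n ≤ 2⁻¹ ^ m) : m ≤ n := by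
  by_contra! hlt
  rw [← ENNReal.inv_pow, ← ENNReal.inv_pow, ENNReal.inv_le_inv] at h
  have : 2 ^ m ≤ 2 ^ n := by exact_mod_cast h
  exact absurd this (not_le.2 (Nat.pow_lt_pow_right one_lt_two hlt))

theorem tsum_two_inv_pow_succ : ∑' k : ℕ, (2 : ℝ≥0∞)⁻¹ ^ (k + 1) = 1 := by
  rw [ENNReal.tsum_geometric_add_one, ENNReal.one_sub_inv_two, inv_inv,
    ENNReal.inv_mul_cancel two_ne_zero ENNReal.ofNat_ne_top]

/-- The members of a Martin-Löf test have prefix-free descriptions that save arbitrarily many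
bits. -/
theorem MLTest.exists_prefixFreeMachine {μ : MeasureTheory.Measure Seq} (hμ : FairCoin μ)
    {T : ℕ → Set Seq} (hT : MLTest μ T) :
    ∃ M : Str →. Str, PrefixFreeMachine M ∧
      ∀ A ∈ ⋂ i, T i, ∀ k, ∃ n, k ≤ n ∧ Cplx M (pre A n) ≤ (n - k + 1 : ℕ) := by
  obtain ⟨W, hW, hTW, hTμ⟩ := hT
  obtain ⟨V, hV, hVfree, hVW⟩ := exists_primrec_prefixFree hW
  have hVlen : ∀ k ρ, (2 * k + 1, ρ) ∈ V → k ≤ ρ.length := fun k ρ hρ => by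
    have hle : (2 : ℝ≥0∞)⁻¹ ^ ρ.length ≤ 2⁻¹ ^ (2 * k + 1) := by
      rw [← hμ ρ]
      refine (MeasureTheory.measure_mono ?_).trans (hTμ (2 * k + 1))
      rw [hTW, ← hVW]
      exact Set.subset_biUnion_of_mem (u := cyl) hρ
    have := le_of_two_inv_pow_le hle
    omega
  let req : ℕ × Str → Option (ℕ × Str) := fun x =>
    if (2 * x.1 + 1, x.2) ∈ V then some (x.2.length - x.1, x.2) else none
  let r : ℕ → Option (ℕ × Str) := fun j => (Encodable.decode₂ (ℕ × Str) j).bind req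
  have hreq : Primrec req := by
    refine Primrec.ite (hV.comp ?_) (Primrec.option_some.comp ?_) (Primrec.const none)
    · exact (Primrec.succ.comp (Primrec.nat_mul.comp (Primrec.const 2) Primrec.fst)).pair
        Primrec.snd
    · exact (Primrec.nat_sub.comp (Primrec.list_length.comp Primrec.snd) Primrec.fst).pair
        Primrec.snd
  have hr : Primrec r := Primrec.option_bind Primrec.decode₂ (hreq.comp Primrec.snd).to₂
  have hrenc : ∀ x, r (Encodable.encode x) = req x := fun x => by
    simp [r, Encodable.decode₂_encode]
  have hweight : ∀ k, ∑' ρ, (weight (req (k, ρ)) : ℝ≥0∞) ≤ 2⁻¹ ^ (k + 1) := fun k => by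
    have hterm : ∀ ρ, (weight (req (k, ρ)) : ℝ≥0∞) =
        {ρ | (2 * k + 1, ρ) ∈ V}.indicator (fun ρ : Str => 2 ^ k * 2⁻¹ ^ ρ.length) ρ := fun ρ => by
      by_cases hρ : (2 * k + 1, ρ) ∈ V
      · rw [Set.indicator_of_mem (by exact hρ), ← two_inv_pow_sub (hVlen k ρ hρ)]
        simp [req, hρ, weight, ENNReal.inv_pow]
      · rw [Set.indicator_of_notMem (by exact hρ)]
        simp [req, hρ, weight]
    calc ∑' ρ, (weight (req (k, ρ)) : ℝ≥0∞)
        = ∑' ρ : {ρ | (2 * k + 1, ρ) ∈ V}, 2 ^ k * (2 : ℝ≥0∞)⁻¹ ^ ρ.1.length := by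
          rw [tsum_congr hterm]
          exact (tsum_subtype _ fun ρ : Str => 2 ^ k * (2 : ℝ≥0∞)⁻¹ ^ ρ.length).symm
      _ = 2 ^ k * μ (T (2 * k + 1)) := by
          rw [ENNReal.tsum_mul_left, (hVfree _).tsum_eq_measure hμ, hVW, hTW]
      _ ≤ 2 ^ k * 2⁻¹ ^ (2 * k + 1) := by gcongr; exact hTμ _
      _ = 2⁻¹ ^ (k + 1) := by
          rw [← two_inv_pow_sub (by omega)]
          congr 1
          omega
  have htotal : ∑' j, (weight (r j) : ℝ≥0∞) ≤ 1 := by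
    have hsupp : Function.support (fun j => (weight (r j) : ℝ≥0∞)) ⊆
        Set.range (Encodable.encode : ℕ × Str → ℕ) := fun j hj => by
      by_contra hnot
      apply hj
      have hnone : Encodable.decode₂ (ℕ × Str) j = none :=
        Option.eq_none_iff_forall_not_mem.2 fun x hx => hnot ⟨x, Encodable.mem_decode₂.1 hx⟩
      simp [r, hnone, weight]
    rw [← Encodable.encode_injective.tsum_eq hsupp]
    simp only [hrenc]
    rw [ENNReal.tsum_prod', ← tsum_two_inv_pow_succ]
    exact ENNReal.tsum_le_tsum hweight
  obtain ⟨M, hM, hMr⟩ := exists_prefixFreeMachine_of_requests hr htotal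
  refine ⟨M, hM, fun A hA k => ?_⟩
  have hAk := Set.mem_iInter.1 hA (2 * k + 1)
  rw [hTW, ← hVW] at hAk
  simp only [Set.mem_iUnion, Set.mem_ofPred_eq, exists_prop] at hAk
  obtain ⟨ρ, hρ, hAρ : pre A _ = ρ⟩ := hAk
  refine ⟨ρ.length, hVlen k ρ hρ, ?_⟩
  rw [hAρ]
  refine hMr (Encodable.encode (k, ρ)) _ _ ?_
  rw [hrenc]
  simp [req, hρ]

/-- The classes of sequences with an initial segment that a prefix-free machine compresses by
`k` bits form a Martin-Löf test. -/
theorem PrefixFreeMachine.mlTest {μ : MeasureTheory.Measure Seq} (hμ : FairCoin μ)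
    {U : Str →. Str} (hU : PrefixFreeMachine U) :
    MLTest μ fun k => ⋃ σ ∈ {σ : Str | ∃ p, σ ∈ U p ∧ p.length + k ≤ σ.length}, cyl σ := by
  refine ⟨{x | ∃ p, x.2 ∈ U p ∧ p.length + x.1 ≤ x.2.length}, ?_, fun _ => rfl, fun k => ?_⟩
  · obtain ⟨g, hg, -, hgmem⟩ := exists_primrec_stages hU.1
    let F : ℕ × Str → ℕ → Option Unit := fun x j =>
      (Encodable.decode (α := ℕ × Str) j).bind fun y =>
        if g y.1 y.2 = some x.2 ∧ y.2.length + x.1 ≤ x.2.length then some () else none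
    have hF : Primrec₂ F := by
      refine Primrec.option_bind (Primrec.decode.comp Primrec.snd)
        (Primrec.ite (.and ?_ ?_) (Primrec.const _) (Primrec.const none))
      · exact Primrec.eq.comp
          (hg.comp (Primrec.fst.comp Primrec.snd) (Primrec.snd.comp Primrec.snd))
          (Primrec.option_some.comp (Primrec.snd.comp (Primrec.fst.comp Primrec.fst)))
      · exact Primrec.nat_le.comp
          (Primrec.nat_add.comp (Primrec.list_length.comp (Primrec.snd.comp Primrec.snd))
            (Primrec.fst.comp (Primrec.fst.comp Primrec.fst)))
          (Primrec.list_length.comp (Primrec.snd.comp (Primrec.fst.comp Primrec.fst)))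
    refine REPred.of_eq (Partrec.rfindOpt hF.to_comp).dom_re fun x => ?_
    rw [Nat.rfindOpt_dom]
    constructor
    · rintro ⟨j, u, hu⟩
      obtain ⟨y, -, hy⟩ := Option.mem_bind_iff.1 hu
      split_ifs at hy with h
      · exact ⟨y.2, (hgmem _ _).2 ⟨y.1, h.1⟩, h.2⟩
      · simp at hy
    · rintro ⟨p, hp, hlen⟩
      obtain ⟨s, hs⟩ := (hgmem _ _).1 hp
      refine ⟨Encodable.encode (s, p), (), Option.mem_bind_iff.2 ⟨(s, p), Encodable.encodek _, ?_⟩⟩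
      rw [if_pos ⟨hs, hlen⟩]
      rfl
  · have hsub : (⋃ σ ∈ {σ : Str | ∃ p, σ ∈ U p ∧ p.length + k ≤ σ.length}, cyl σ) ⊆
        ⋃ p : {p | (U p).Dom}, ⋃ _ : p.1.length + k ≤ ((U p.1).get p.2).length,
          cyl ((U p.1).get p.2) := by
      simp only [Set.iUnion_subset_iff, Set.mem_ofPred_eq]
      rintro σ ⟨p, ⟨hp, rfl⟩, hlen⟩
      exact Set.subset_iUnion₂_of_subset ⟨p, hp⟩ hlen subset_rfl
    calc μ _ ≤ ∑' p : {p | (U p).Dom}, 2⁻¹ ^ p.1.length * (2 : ℝ≥0∞)⁻¹ ^ k := by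
          refine (MeasureTheory.measure_mono hsub).trans
            ((MeasureTheory.measure_iUnion_le _).trans (ENNReal.tsum_le_tsum fun p => ?_))
          by_cases hlen : p.1.length + k ≤ ((U p.1).get p.2).length
          · simp only [hlen, Set.iUnion_true]
            rw [hμ, ← pow_add]
            exact pow_le_pow_right_of_le_one' (by simp) hlen
          · simp [hlen]
      _ ≤ 1 * 2⁻¹ ^ k := by
          rw [ENNReal.tsum_mul_right]
          gcongr
          exact hU.2.tsum_le_one hμ
      _ = 2⁻¹ ^ k := one_mul _

/-- **Levin–Schnorr theorem**: `A ∈ 2^ω` is Martin-Löf random if and only if there is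
some `c ∈ ℕ` with `K(A↾n) ≥ n - c` for all `n` (stated as `n ≤ K(A↾n) + c`). -/
theorem levin_schnorr (μ : MeasureTheory.Measure Seq) (hμ : FairCoin μ)
    (U : Str →. Str) (hU : UniversalPFMachine U) (A : Seq) :
    MLRandom μ A ↔ ∃ c : ℕ, ∀ n : ℕ, (n : ℕ∞) ≤ Cplx U (pre A n) + c := by
  constructor
  · intro hA
    by_contra! hc
    refine hA _ (hU.1.mlTest hμ) (Set.mem_iInter.2 fun k => ?_)
    obtain ⟨n, hn⟩ := hc k
    have hlt : Cplx U (pre A n) < ⊤ :=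
      lt_of_le_of_lt le_self_add (hn.trans (WithTop.coe_lt_top n))
    have hne : ((fun σ : Str => (σ.length : ℕ∞)) '' {σ | pre A n ∈ U σ}).Nonempty := by
      by_contra hempty
      rw [Cplx, Set.not_nonempty_iff_eq_empty.1 hempty, sInf_empty] at hlt
      exact lt_irrefl _ hlt
    obtain ⟨p, hp, hpn⟩ := csInf_mem hne
    have hlen : p.length + k ≤ n := by
      rw [Cplx, ← hpn] at hn
      simp only at hn
      exact_mod_cast hn.le
    exact Set.mem_biUnion (show pre A n ∈ _ from ⟨p, hp, by rwa [length_pre]⟩) (mem_cyl_pre A n)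
  · rintro ⟨c, hc⟩ T hT hA
    obtain ⟨M, hM, hMA⟩ := hT.exists_prefixFreeMachine hμ
    obtain ⟨d, hd⟩ := hU.2 M hM
    obtain ⟨n, hkn, hn⟩ := hMA A hA (c + d + 2)
    have hle : (n : ℕ∞) ≤ ((n - (c + d + 2) + 1 : ℕ) : ℕ∞) + d + c :=
      (hc n).trans (by gcongr; exact (hd _).trans (by gcongr))
    have : n ≤ n - (c + d + 2) + 1 + d + c := by exact_mod_cast hle
    omega

end AR
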